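/- (Theorem 2, worst-case mean-excess travel time with support set) Let a, b ∈ ℝⁿ with a ≤ b componentwise, let ξ̂¹,…,ξ̂ᴺ ∈ [a,b] (N ≥ 1) with empirical distribution F_N, let v ∈ ℝⁿ, α ∈ (0,1] and ε ≥ 0. Then the infimum over t ∈ ℝ of t + (1/α)·sup{ ∫ h(v,t,ξ) dμ(ξ) : μ a Borel probability measure supported on [a,b] with d_W(F_N,μ) ≤ ε } equals the optimal value of the convex program minimizing t + (1/α)·((1/N)·Σ_{i=1}^N s_i + λ·ε) over t ∈ ℝ, s ∈ ℝᴺ, λ ∈ ℝ, and γ_i, η_i ∈ ℝⁿ (i = 1,…,N) subject to ⟨v + γ_i − η_i, ξ̂ⁱ⟩ − ⟨γ_i,a⟩ + ⟨η_i,b⟩ − t ≤ s_i, ‖v + γ_i − η_i‖_q ≤ λ, γ_i ≥ 0, η_i ≥ 0 and s_i ≥ 0 for all i. -/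

import Mathlib

open MeasureTheory Filter Topology
open scoped ENNReal BigOperators

/-- The ℓp norm on ℝⁿ, for `p ∈ [1,∞]` (an extended nonnegative real). -/
noncomputable def lpNorm {n : ℕ} (p : ℝ≥0∞) (x : Fin n → ℝ) : ℝ :=
  if p = ∞ then ⨆ i, |x i| else (∑ i, |x i| ^ p.toReal) ^ (1 / p.toReal)

/-- The Euclidean inner product on ℝⁿ. -/
def ip {n : ℕ} (w x : Fin n → ℝ) : ℝ := ∑ i, w i * x i


/-- `h(v,t,ξ) = max(⟨ξ,v⟩ − t, 0)`. -/
noncomputable def hfun {n : ℕ} (v : Fin n → ℝ) (t : ℝ) (ξ : Fin n → ℝ) : ℝ :=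
  max (ip ξ v - t) 0

/-- The empirical distribution `(1/N)·Σᵢ δ_{ξⁱ}` of `N` samples. -/
noncomputable def empirical {n : ℕ} (N : ℕ) (ξ : Fin N → Fin n → ℝ) :
    MeasureTheory.Measure (Fin n → ℝ) :=
  (N : ℝ≥0∞)⁻¹ • ∑ i, MeasureTheory.Measure.dirac (ξ i)

/-- The Wasserstein distance (valued in `ℝ≥0∞`) between two Borel probability measures
on ℝⁿ, with ground metric `‖·‖_p`: the infimum over couplings `K` (probability measures on
ℝⁿ × ℝⁿ with the prescribed marginals) of `∫ ‖x − y‖_p dK(x,y)`. -/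
noncomputable def dW {n : ℕ} (p : ℝ≥0∞) (μ ν : MeasureTheory.Measure (Fin n → ℝ)) : ℝ≥0∞ :=
  ⨅ (K : MeasureTheory.Measure ((Fin n → ℝ) × (Fin n → ℝ)))
    (_ : MeasureTheory.IsProbabilityMeasure K)
    (_ : K.map Prod.fst = μ) (_ : K.map Prod.snd = ν),
    ∫⁻ z, ENNReal.ofReal (lpNorm p (z.1 - z.2)) ∂K

/-!
A transport plan enters the worst-case problem only through its expected reward and its expected
cost, and the achievable pairs form a convex set. Plans that move each sample as a whole already
give a compact set of pairs, whose convex hull is compact in the plane; on this hull the minimax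
theorem produces a Lagrange multiplier `lam` for the transport budget. Pricing the budget decouples
the samples: the potential `s i` must dominate the reward of `y` minus `lam` times the cost of
moving the sample `i` to `y`, for every `y` in the box. The penalty `lam * ‖x - y‖_p` is a maximum
of linear functions over the dual-norm ball of radius `lam`, so a saddle point replaces it by a
single linear function, and the support function of the box, split into positive and negative
parts, yields `γ i` and `η i`.
-/

section Minimax

variable {E F : Type*} [AddCommGroup E] [Module ℝ E] [TopologicalSpace E]
  [IsTopologicalAddGroup E] [ContinuousSMul ℝ E]
  [AddCommGroup F] [Module ℝ F] [TopologicalSpace F] [IsTopologicalAddGroup F]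
  [ContinuousSMul ℝ F]

theorem exists_forall_lt_of_forall_exists_lt {X : Set E} {Y : Set F} {f : E → F → ℝ} {M : ℝ}
    (neX : X.Nonempty) (kX : IsCompact X) (cX : Convex ℝ X) (cY : Convex ℝ Y)
    (hfx : ∀ y ∈ Y, LowerSemicontinuousOn (fun x => f x y) X)
    (hfx' : ∀ y ∈ Y, QuasiconvexOn ℝ X fun x => f x y)
    (hfy : ∀ x ∈ X, UpperSemicontinuousOn (f x) Y) (hfy' : ∀ x ∈ X, QuasiconcaveOn ℝ Y (f x))
    (h : ∀ x ∈ X, ∃ y ∈ Y, M < f x y) :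
    ∃ y ∈ Y, ∀ x ∈ X, M < f x y := by
  choose! g hgY hg using h
  obtain ⟨s, hs, hcover⟩ := kX.elim_nhdsWithin_subcover (fun x => {x' | M < f x' (g x)})
    fun x hx => hfx _ (hgY x hx) x hx M (hg x hx)
  refine Sion.exists_lt_iInf_of_lt_iInf_of_finite neX kX hfx hfx' cY hfy hfy' cX
    (s.finite_toSet.image g) (Set.image_subset_iff.2 fun x hx => hgY x (hs x hx)) fun x hx => ?_
  obtain ⟨x', hx', hlt⟩ := Set.mem_iUnion₂.1 (hcover hx)
  exact ⟨g x', Set.mem_image_of_mem g hx', hlt⟩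

theorem exists_lagrange_multiplier {V : Set E} {f g : E → ℝ} {b M : ℝ} (neV : V.Nonempty)
    (kV : IsCompact V) (hf : ContinuousOn f V) (hf' : ConcaveOn ℝ V f)
    (hg : ContinuousOn g V) (hg' : ConvexOn ℝ V g) (h : ∀ x ∈ V, g x ≤ b → f x < M) :
    ∃ lam, 0 ≤ lam ∧ ∀ x ∈ V, f x + lam * (b - g x) < M := by
  have hlam : ∀ x ∈ V, ∃ lam ∈ Set.Ici (0 : ℝ), -M < lam * (g x + -b) - f x := by
    intro x hx
    rcases le_or_gt (g x) b with hgx | hgx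
    · exact ⟨0, Set.self_mem_Ici, by linarith [h x hx hgx]⟩
    · have hgx : 0 < g x + -b := by linarith
      refine ⟨(|f x - M| + 1) / (g x + -b), Set.mem_Ici.2 (by positivity), ?_⟩
      rw [div_mul_cancel₀ _ hgx.ne']
      linarith [le_abs_self (f x - M)]
  obtain ⟨lam, hlam, hlt⟩ := exists_forall_lt_of_forall_exists_lt
    (f := fun x lam => lam * (g x + -b) - f x) neV kV hf'.1 (convex_Ici 0)
    (fun lam _ => ContinuousOn.lowerSemicontinuousOn (by fun_prop))
    (fun lam hlam => (((hg'.add_const (-b)).smul hlam).sub hf').quasiconvexOn)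
    (fun x _ => ContinuousOn.upperSemicontinuousOn (by fun_prop))
    (fun x _ => (((LinearMap.toSpanSingleton ℝ ℝ (g x + -b)).concaveOn (convex_Ici 0)).sub
      (convexOn_const (f x) (convex_Ici 0))).quasiconcaveOn) hlam
  exact ⟨lam, hlam, fun x hx => by linarith [hlt x hx]⟩

end Minimax

theorem isCompact_convexHull_of_isCompact {E : Type*} [NormedAddCommGroup E] [NormedSpace ℝ E]
    [FiniteDimensional ℝ E] {s : Set E} (hs : IsCompact s) : IsCompact (convexHull ℝ s) := by
  let combos (k : ℕ) : Set E := (fun wz : (Fin k → ℝ) × (Fin k → E) => ∑ i, wz.1 i • wz.2 i) ''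
    (stdSimplex ℝ (Fin k) ×ˢ Set.univ.pi fun _ => s)
  have hcombos (k : ℕ) : IsCompact (combos k) :=
    ((isCompact_stdSimplex ℝ (Fin k)).prod (isCompact_univ_pi fun _ => hs)).image (by fun_prop)
  have hull_eq : convexHull ℝ s = ⋃ k ∈ Set.Iic (Module.finrank ℝ E + 1), combos k := by
    refine Set.Subset.antisymm (fun x hx => ?_) (Set.iUnion₂_subset fun k _ => ?_)
    · obtain ⟨ι, _, z, w, hz, hind, hw, hw1, rfl⟩ := eq_pos_convex_span_of_mem_convexHull hx
      let e := Fintype.equivFin ι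
      refine Set.mem_biUnion (x := Fintype.card ι) ?_
        ⟨(w ∘ e.symm, z ∘ e.symm), ⟨⟨fun i => (hw _).le, ?_⟩, fun i _ => hz ⟨_, rfl⟩⟩, ?_⟩
      · exact hind.card_le_finrank_succ.trans (by gcongr; exact Submodule.finrank_le _)
      · simpa only [Function.comp_apply, e.symm.sum_comp w] using hw1
      · exact e.symm.sum_comp fun i => w i • z i
    · rintro _ ⟨⟨w, z⟩, ⟨hw, hz⟩, rfl⟩
      exact (convex_convexHull ℝ s).sum_mem (fun i _ => hw.1 i) hw.2
        fun i _ => subset_convexHull ℝ s (hz i trivial)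
  rw [hull_eq]
  exact (Set.finite_Iic _).isCompact_biUnion fun k _ => hcombos k

section Transport

variable {X Y : Type*} [MeasurableSpace X] [MeasurableSpace Y]

/-- The optimal cost of transporting `μ` to `ν` when moving a unit of mass from `x` to `y` costs
`c x y`. It is `∞` when no coupling exists, and `dW p` is the case `c x y = ‖x - y‖_p`. -/
noncomputable def transportCost (c : X → X → ℝ) (μ ν : Measure X) : ℝ≥0∞ :=
  ⨅ (K : Measure (X × X)) (_ : IsProbabilityMeasure K)
    (_ : K.map Prod.fst = μ) (_ : K.map Prod.snd = ν), ∫⁻ z, ENNReal.ofReal (c z.1 z.2) ∂K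

theorem transportCost_le {c : X → X → ℝ} (K : Measure (X × X)) [hK : IsProbabilityMeasure K] :
    transportCost c (K.map Prod.fst) (K.map Prod.snd) ≤ ∫⁻ z, ENNReal.ofReal (c z.1 z.2) ∂K :=
  iInf_le_of_le K <| iInf_le_of_le hK <| iInf_le_of_le rfl <| iInf_le _ rfl

theorem lintegral_le_add_mul_transportCost {c : X → X → ℝ} {μ ν : Measure X}
    {φ ψ : X → ℝ≥0∞} {lam : ℝ≥0∞} (hφ : Measurable φ) (hlam : lam ≠ ∞)
    (hcost : transportCost c μ ν ≠ ∞)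
    (h : ∀ᵐ y ∂ν, ∀ x, ψ y ≤ φ x + lam * ENNReal.ofReal (c x y)) :
    ∫⁻ y, ψ y ∂ν ≤ ∫⁻ x, φ x ∂μ + lam * transportCost c μ ν := by
  have hlt : ∀ C > transportCost c μ ν, ∫⁻ y, ψ y ∂ν ≤ ∫⁻ x, φ x ∂μ + lam * C := by
    intro C hC
    simp only [gt_iff_lt, transportCost, iInf_lt_iff] at hC
    obtain ⟨K, -, rfl, rfl, hKC⟩ := hC
    calc ∫⁻ y, ψ y ∂(K.map Prod.snd)
        ≤ ∫⁻ z, ψ z.2 ∂K := lintegral_map_le _ _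
      _ ≤ ∫⁻ z, φ z.1 + lam * ENNReal.ofReal (c z.1 z.2) ∂K :=
        lintegral_mono_ae ((ae_of_ae_map measurable_snd.aemeasurable h).mono fun z hz => hz z.1)
      _ = ∫⁻ x, φ x ∂(K.map Prod.fst) + lam * ∫⁻ z, ENNReal.ofReal (c z.1 z.2) ∂K := by
        rw [lintegral_map hφ measurable_fst, ← lintegral_const_mul' _ _ hlam]
        exact lintegral_add_left (hφ.comp measurable_fst) _
      _ ≤ ∫⁻ x, φ x ∂(K.map Prod.fst) + lam * C := by gcongr
  have : (𝓝[>] transportCost c μ ν).NeBot := nhdsGT_neBot_of_exists_gt ⟨∞, hcost.lt_top⟩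
  refine ge_of_tendsto (x := 𝓝[>] transportCost c μ ν) ?_ (eventually_mem_nhdsWithin.mono hlt)
  exact (((ENNReal.continuous_const_mul hlam).tendsto _).const_add _).mono_left nhdsWithin_le_nhds

variable {ι : Type*} [Fintype ι]

/-- The uniform distribution on the samples `x i`; this is `empirical` for any finite sample type
and any sample space. -/
noncomputable def empiricalMeasure (x : ι → X) : Measure X :=
  (Fintype.card ι : ℝ≥0∞)⁻¹ • ∑ i, Measure.dirac (x i)

theorem map_empiricalMeasure {f : X → Y} (hf : Measurable f) (x : ι → X) :
    (empiricalMeasure x).map f = empiricalMeasure (f ∘ x) := by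
  rw [empiricalMeasure, Measure.map_smul, Measure.map_finset_sum hf.aemeasurable]
  simp only [Measure.map_dirac' hf, empiricalMeasure, Function.comp_apply]

instance [Nonempty ι] (x : ι → X) : IsProbabilityMeasure (empiricalMeasure x) where
  measure_univ := by
    simp [empiricalMeasure, ENNReal.inv_mul_cancel]

theorem integrable_empiricalMeasure [MeasurableSingletonClass X] {E : Type*}
    [NormedAddCommGroup E] (x : ι → X) (f : X → E) :
    Integrable f (empiricalMeasure x) := by
  cases isEmpty_or_nonempty ι
  · simp [empiricalMeasure]
  · exact (integrable_finsetSum_measure.2 fun i _ => integrable_dirac (by simp)).smul_measure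
     (by simp)

theorem integral_empiricalMeasure [MeasurableSingletonClass X] (x : ι → X) (f : X → ℝ) :
    ∫ z, f z ∂empiricalMeasure x = 𝔼 i, f (x i) := by
  rw [empiricalMeasure, integral_smul_measure,
    integral_finsetSum_measure fun i _ => integrable_dirac (by simp),
    Fintype.expect_eq_sum_div_card]
  simp [div_eq_inv_mul]

theorem lintegral_empiricalMeasure_le {x : ι → X} {φ : X → ℝ≥0∞} {s : ι → ℝ} (hs : 0 ≤ s)
    (h : ∀ i, φ (x i) ≤ ENNReal.ofReal (s i)) :
    ∫⁻ z, φ z ∂empiricalMeasure x ≤ ENNReal.ofReal (𝔼 i, s i) := by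
  let _ : MeasurableSpace ι := ⊤
  calc ∫⁻ z, φ z ∂empiricalMeasure x
      = ∫⁻ z, φ z ∂((empiricalMeasure id).map x) := by
        rw [map_empiricalMeasure measurable_from_top, Function.comp_id]
    _ ≤ ∫⁻ i, φ (x i) ∂empiricalMeasure id := lintegral_map_le _ _
    _ ≤ ∫⁻ i, ENNReal.ofReal (s i) ∂empiricalMeasure id := lintegral_mono h
    _ = ENNReal.ofReal (∫ i, s i ∂empiricalMeasure id) :=
        (ofReal_integral_eq_lintegral_ofReal (integrable_empiricalMeasure id s)
          (ae_of_all _ hs)).symm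
    _ = ENNReal.ofReal (𝔼 i, s i) := by rw [integral_empiricalMeasure]; rfl

end Transport

section StrongDuality

variable {ι X : Type*} [Fintype ι] {c : X → X → ℝ} {h : X → ℝ} {B : Set X} {x : ι → X} {ε : ℝ}

/-- The values of the dual problem: the multiplier `lam` prices the transport budget `ε`, and the
potential `s i` bounds the net reward of moving the sample `x i` within `B`. -/
def dualValues (c : X → X → ℝ) (h : X → ℝ) (B : Set X) (x : ι → X) (ε : ℝ) : Set ℝ :=
  {d | ∃ (s : ι → ℝ) (lam : ℝ), 0 ≤ lam ∧ (∀ i, ∀ y ∈ B, h y ≤ s i + lam * c (x i) y) ∧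
    d = 𝔼 i, s i + lam * ε}

theorem dualValues_nonempty [TopologicalSpace X] (kB : IsCompact B) (neB : B.Nonempty)
    (hhB : ContinuousOn h B) : (dualValues c h B x ε).Nonempty := by
  obtain ⟨y, -, hy⟩ := kB.exists_isMaxOn neB hhB
  exact ⟨_, fun _ => h y, 0, le_rfl, fun i z hz => by simpa using hy hz, rfl⟩

theorem expect_le_of_mem_dualValues (hcx : ∀ i, c (x i) (x i) = 0) (hx : ∀ i, x i ∈ B)
    (hε : 0 ≤ ε) {d : ℝ} (hd : d ∈ dualValues c h B x ε) : 𝔼 i, h (x i) ≤ d := by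
  obtain ⟨s, lam, hlam, hs, rfl⟩ := hd
  have hs' : 𝔼 i, h (x i) ≤ 𝔼 i, s i :=
    Finset.expect_le_expect fun i _ => by simpa [hcx] using hs i (x i) (hx i)
  exact hs'.trans (le_add_of_nonneg_right (by positivity))

theorem continuousOn_expect [TopologicalSpace X] {f : ι → X → ℝ}
    (hf : ∀ i, ContinuousOn (f i) B) :
    ContinuousOn (fun y : ι → X => 𝔼 i, f i (y i)) (Set.univ.pi fun _ => B) := by
  simp only [Fintype.expect_eq_sum_div_card]
  exact (continuousOn_finsetSum _ fun i _ => (hf i).comp (continuousOn_apply i _)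
    fun y hy => Set.mem_univ_pi.1 hy i).div_const _

variable [MeasurableSpace X]

/-- The pairs (expected reward `h`, expected cost `c`) of the transport plans that move `μ`
into `B`. -/
def planValues (c : X → X → ℝ) (h : X → ℝ) (B : Set X) (μ : Measure X) : Set (ℝ × ℝ) :=
  {r | ∃ K : Measure (X × X), K.map Prod.fst = μ ∧ K.map Prod.snd Bᶜ = 0 ∧
    Integrable (fun z => (h z.2, c z.1 z.2)) K ∧ r = ∫ z, (h z.2, c z.1 z.2) ∂K}

theorem convex_planValues (μ : Measure X) : Convex ℝ (planValues c h B μ) := by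
  rintro _ ⟨K, hK, hKB, hKi, rfl⟩ _ ⟨L, hL, hLB, hLi, rfl⟩ a b ha hb hab
  lift a to NNReal using ha
  lift b to NNReal using hb
  refine ⟨a • K + b • L, ?_, ?_, hKi.smul_measure_nnreal.add_measure hLi.smul_measure_nnreal, ?_⟩
  · have hab : a + b = 1 := by exact_mod_cast hab
    rw [Measure.map_add _ _ measurable_fst, Measure.map_smul, Measure.map_smul, hK, hL,
      ← add_smul, hab, one_smul]
  · simp [Measure.map_add _ _ measurable_snd, Measure.map_smul, hKB, hLB]
  · rw [integral_add_measure hKi.smul_measure_nnreal hLi.smul_measure_nnreal,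
      integral_smul_nnreal_measure, integral_smul_nnreal_measure]
    rfl

/-- The values of the primal problem: the expectations of `h` under the distributions on `B`
within transport cost `ε` of `μ`. -/
def primalValues (c : X → X → ℝ) (h : X → ℝ) (B : Set X) (μ : Measure X) (ε : ℝ) : Set ℝ :=
  {r | ∃ ν : Measure X, IsProbabilityMeasure ν ∧ ν Bᶜ = 0 ∧
    transportCost c μ ν ≤ ENNReal.ofReal ε ∧ r = ∫ y, h y ∂ν}

theorem fst_mem_primalValues (hc : ∀ x y, 0 ≤ c x y) (hh : Measurable h) {μ : Measure X}
    [hμ : IsProbabilityMeasure μ] {r : ℝ × ℝ}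
    (hr : r ∈ planValues c h B μ) (hrε : r.2 ≤ ε) :
    r.1 ∈ primalValues c h B μ ε := by
  obtain ⟨K, hK, hKB, hKi, rfl⟩ := hr
  have : IsProbabilityMeasure K := by
    rw [← hK] at hμ
    exact Measure.isProbabilityMeasure_of_map Prod.fst
  rw [integral_pair hKi.fst hKi.snd] at hrε ⊢
  refine ⟨K.map Prod.snd, Measure.isProbabilityMeasure_map measurable_snd.aemeasurable, hKB, ?_,
    (integral_map measurable_snd.aemeasurable hh.aestronglyMeasurable).symm⟩
  calc transportCost c μ (K.map Prod.snd)
      ≤ ∫⁻ z, ENNReal.ofReal (c z.1 z.2) ∂K := hK ▸ transportCost_le K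
    _ = ENNReal.ofReal (∫ z, c z.1 z.2 ∂K) :=
        (ofReal_integral_eq_lintegral_ofReal hKi.snd (ae_of_all _ fun z => hc _ _)).symm
    _ ≤ ENNReal.ofReal ε := ENNReal.ofReal_le_ofReal hrε

variable [MeasurableSingletonClass X]

theorem expect_mem_planValues {y : ι → X} (hy : ∀ i, y i ∈ B) :
    (𝔼 i, h (y i), 𝔼 i, c (x i) (y i)) ∈ planValues c h B (empiricalMeasure x) := by
  let _ : MeasurableSpace ι := ⊤
  refine ⟨empiricalMeasure fun i => (x i, y i), map_empiricalMeasure measurable_fst _, ?_,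
    integrable_empiricalMeasure _ _, ?_⟩
  · rw [map_empiricalMeasure measurable_snd]
    simp [empiricalMeasure, hy]
  · rw [integral_pair (integrable_empiricalMeasure _ _) (integrable_empiricalMeasure _ _),
      integral_empiricalMeasure, integral_empiricalMeasure]

theorem primal_le_dual (hcx : ∀ i, c (x i) (x i) = 0)
    (hh : Measurable h) (hh0 : 0 ≤ h) (hx : ∀ i, x i ∈ B) (hε : 0 ≤ ε) {r d : ℝ}
    (hr : r ∈ primalValues c h B (empiricalMeasure x) ε) (hd : d ∈ dualValues c h B x ε) :
    r ≤ d := by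
  classical
  obtain ⟨ν, -, hνB, hcost, rfl⟩ := hr
  obtain ⟨s, lam, hlam, hs, rfl⟩ := hd
  have hs0 : 0 ≤ s := fun i => by simpa [hcx] using (hh0 (x i)).trans (hs i (x i) (hx i))
  have hs_mean : 0 ≤ 𝔼 i, s i := Finset.expect_nonneg fun i _ => hs0 i
  let φ (z : X) : ℝ≥0∞ := ⨅ i, if z = x i then ENNReal.ofReal (s i) else ∞
  have hφ : Measurable φ := Measurable.iInf fun i =>
    Measurable.ite (measurableSet_singleton (x i)) measurable_const measurable_const
  have bound : ∀ᵐ y ∂ν, ∀ z, ENNReal.ofReal (h y) ≤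
      φ z + ENNReal.ofReal lam * ENNReal.ofReal (c z y) := by
    filter_upwards [mem_ae_iff.2 hνB] with y hy z
    rw [ENNReal.iInf_add, ← ENNReal.ofReal_mul hlam]
    refine le_iInf fun i => ?_
    split_ifs with hz
    · rw [hz]
      exact (ENNReal.ofReal_le_ofReal (hs i y hy)).trans ENNReal.ofReal_add_le
    · simp
  have hφs : ∀ i, φ (x i) ≤ ENNReal.ofReal (s i) := fun i => (iInf_le _ i).trans (by simp)
  rw [integral_eq_lintegral_of_nonneg_ae (ae_of_all _ hh0) hh.aestronglyMeasurable]
  refine ENNReal.toReal_le_of_le_ofReal (by positivity) ?_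
  calc ∫⁻ y, ENNReal.ofReal (h y) ∂ν
      ≤ ∫⁻ z, φ z ∂empiricalMeasure x +
          ENNReal.ofReal lam * transportCost c (empiricalMeasure x) ν :=
        lintegral_le_add_mul_transportCost hφ ENNReal.ofReal_ne_top
          (hcost.trans_lt ENNReal.ofReal_lt_top).ne bound
    _ ≤ ENNReal.ofReal (𝔼 i, s i) + ENNReal.ofReal lam * ENNReal.ofReal ε := by
        gcongr
        exact lintegral_empiricalMeasure_le hs0 hφs
    _ = ENNReal.ofReal (𝔼 i, s i + lam * ε) := by
        rw [← ENNReal.ofReal_mul hlam, ENNReal.ofReal_add hs_mean (by positivity)]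

variable [Nonempty ι]

theorem expect_mem_primalValues (hc : ∀ x y, 0 ≤ c x y) (hcx : ∀ i, c (x i) (x i) = 0)
    (hh : Measurable h) (hx : ∀ i, x i ∈ B) (hε : 0 ≤ ε) :
    𝔼 i, h (x i) ∈ primalValues c h B (empiricalMeasure x) ε :=
  fst_mem_primalValues hc hh (expect_mem_planValues hx) (by simpa [hcx] using hε)

variable [TopologicalSpace X]

theorem exists_mem_dualValues_lt (hc : ∀ x y, 0 ≤ c x y) (hh : Measurable h)
    (kB : IsCompact B) (neB : B.Nonempty) (hhB : ContinuousOn h B)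
    (hcB : ∀ i, ContinuousOn (c (x i)) B) {M : ℝ}
    (hM : ∀ r ∈ primalValues c h B (empiricalMeasure x) ε, r < M) :
    ∃ d ∈ dualValues c h B x ε, d < M := by
  let value (y : ι → X) : ℝ × ℝ := (𝔼 i, h (y i), 𝔼 i, c (x i) (y i))
  let V : Set (ℝ × ℝ) := convexHull ℝ (value '' Set.univ.pi fun _ => B)
  have kV : IsCompact V := by
    refine isCompact_convexHull_of_isCompact
      ((isCompact_univ_pi fun _ => kB).image_of_continuousOn ?_)
    exact (continuousOn_expect fun _ => hhB).prodMk (continuousOn_expect hcB)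
  have neV : V.Nonempty :=
    ((Set.univ_pi_nonempty_iff.2 fun _ => neB).image value).convexHull
  have hV : V ⊆ planValues c h B (empiricalMeasure x) := by
    refine convexHull_min ?_ (convex_planValues _)
    rintro _ ⟨y, hy, rfl⟩
    exact expect_mem_planValues fun i => hy i trivial
  obtain ⟨lam, hlam, hlt⟩ := exists_lagrange_multiplier neV kV continuousOn_fst
    ((LinearMap.fst ℝ ℝ ℝ).concaveOn (convex_convexHull ℝ _)) continuousOn_snd
    ((LinearMap.snd ℝ ℝ ℝ).convexOn (convex_convexHull ℝ _))
    fun r hr hrε => hM _ (fst_mem_primalValues hc hh (hV hr) hrε)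
  have hmax (i : ι) := kB.exists_isMaxOn neB (hhB.sub (continuousOn_const.mul (hcB i)) :
    ContinuousOn (fun y => h y - lam * c (x i) y) B)
  choose y hyB hy using hmax
  refine ⟨_, ⟨fun i => h (y i) - lam * c (x i) (y i), lam, hlam, fun i z hz => ?_, rfl⟩, ?_⟩
  · exact sub_le_iff_le_add.1 (hy i hz)
  · have hy_lt := hlt (value y) (subset_convexHull ℝ _ ⟨y, fun i _ => hyB i, rfl⟩)
    rw [Finset.expect_sub_distrib, ← Finset.mul_expect]
    linarith

theorem sSup_primalValues_eq_sInf_dualValues (hc : ∀ x y, 0 ≤ c x y)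
    (hcx : ∀ i, c (x i) (x i) = 0) (hh : Measurable h) (hh0 : 0 ≤ h) (kB : IsCompact B)
    (hhB : ContinuousOn h B) (hcB : ∀ i, ContinuousOn (c (x i)) B) (hx : ∀ i, x i ∈ B)
    (hε : 0 ≤ ε) :
    sSup (primalValues c h B (empiricalMeasure x) ε) = sInf (dualValues c h B x ε) := by
  have neB : B.Nonempty := ‹Nonempty ι›.elim fun i => ⟨x i, hx i⟩
  have weak {r d : ℝ} (hr : r ∈ primalValues c h B (empiricalMeasure x) ε) :
      d ∈ dualValues c h B x ε → r ≤ d :=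
    primal_le_dual hcx hh hh0 hx hε hr
  have primal_mem := expect_mem_primalValues hc hcx hh hx hε
  obtain ⟨d₀, hd₀⟩ : (dualValues c h B x ε).Nonempty := dualValues_nonempty kB neB hhB
  refine le_antisymm (csSup_le ⟨_, primal_mem⟩ fun r hr => le_csInf ⟨d₀, hd₀⟩ fun d hd =>
    weak hr hd) (le_of_forall_gt_imp_ge_of_dense fun M hM => ?_)
  obtain ⟨d, hd, hdM⟩ := exists_mem_dualValues_lt hc hh kB neB hhB hcB fun r hr =>
    (le_csSup ⟨d₀, fun r hr => weak hr hd₀⟩ hr).trans_lt hM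
  exact (csInf_le ⟨_, fun d hd => weak primal_mem hd⟩ hd).trans hdM.le

end StrongDuality

section LpDuality

variable {ι : Type*} [Fintype ι] {p q : ℝ≥0∞}

theorem holderConjugate_cases (p q : ℝ≥0∞) [h : p.HolderConjugate q] :
    (p = 1 ∧ q = ∞) ∨ (p = ∞ ∧ q = 1) ∨
      (p ≠ ∞ ∧ q ≠ ∞ ∧ p.toReal.HolderConjugate q.toReal) := by
  rcases eq_or_ne p ∞ with rfl | hp
  · exact Or.inr (Or.inl ⟨rfl, (ENNReal.HolderConjugate.eq_top_iff_eq_one ∞ q).1 rfl⟩)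
  rcases eq_or_ne q ∞ with rfl | hq
  · exact Or.inl ⟨(ENNReal.HolderConjugate.eq_top_iff_eq_one ∞ p).1 rfl, rfl⟩
  · exact Or.inr (Or.inr ⟨hp, hq, ENNReal.HolderConjugate.toReal_of_ne_top hp hq⟩)

theorem norm_toLp_one (x : ι → ℝ) : ‖WithLp.toLp 1 x‖ = ∑ i, |x i| := by
  simp [PiLp.norm_eq_of_L1]

theorem norm_toLp_of_ne_top (hp : 0 < p.toReal) (x : ι → ℝ) :
    ‖WithLp.toLp p x‖ = (∑ i, |x i| ^ p.toReal) ^ (1 / p.toReal) := by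
  simp [PiLp.norm_eq_sum hp]

theorem dotProduct_le_norm_one_mul_norm_top (x y : ι → ℝ) :
    x ⬝ᵥ y ≤ ‖WithLp.toLp 1 x‖ * ‖WithLp.toLp ∞ y‖ := by
  rw [norm_toLp_one, Finset.sum_mul]
  refine Finset.sum_le_sum fun i _ => (le_abs_self _).trans ?_
  rw [abs_mul]
  gcongr
  exact PiLp.norm_apply_le (WithLp.toLp ∞ y) i

theorem dotProduct_le_norm_mul_norm [p.HolderConjugate q] (x y : ι → ℝ) :
    x ⬝ᵥ y ≤ ‖WithLp.toLp p x‖ * ‖WithLp.toLp q y‖ := by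
  rcases holderConjugate_cases p q with ⟨rfl, rfl⟩ | ⟨rfl, rfl⟩ | ⟨-, -, h⟩
  · exact dotProduct_le_norm_one_mul_norm_top x y
  · rw [dotProduct_comm, mul_comm]
    exact dotProduct_le_norm_one_mul_norm_top y x
  · rw [norm_toLp_of_ne_top h.pos, norm_toLp_of_ne_top h.symm.pos]
    exact Real.inner_le_Lp_mul_Lq _ _ _ h

theorem abs_coe_sign_le_one (r : ℝ) : |(SignType.sign r : ℝ)| ≤ 1 := by
  rcases lt_trichotomy r 0 with h | h | h <;> simp [h]

theorem exists_norm_top_le_one_dotProduct_eq (x : ι → ℝ) :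
    ∃ w : ι → ℝ, ‖WithLp.toLp ∞ w‖ ≤ 1 ∧ w ⬝ᵥ x = ‖WithLp.toLp 1 x‖ := by
  refine ⟨fun i => SignType.sign (x i), ?_, ?_⟩
  · rw [PiLp.norm_toLp]
    exact (pi_norm_le_iff_of_nonneg zero_le_one).2 fun i => abs_coe_sign_le_one (x i)
  · simp [norm_toLp_one, dotProduct]

theorem exists_norm_one_le_one_dotProduct_eq (x : ι → ℝ) :
    ∃ w : ι → ℝ, ‖WithLp.toLp 1 w‖ ≤ 1 ∧ w ⬝ᵥ x = ‖WithLp.toLp ∞ x‖ := by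
  classical
  rw [PiLp.norm_eq_ciSup]
  cases isEmpty_or_nonempty ι
  · exact ⟨0, by simp⟩
  obtain ⟨i, hi⟩ := exists_eq_ciSup_of_finite (f := fun i => |x i|)
  refine ⟨Pi.single i (SignType.sign (x i)), ?_, ?_⟩
  · simpa using abs_coe_sign_le_one (x i)
  · rw [single_dotProduct, sign_mul_self]
    exact hi

theorem exists_norm_le_one_dotProduct_eq_of_ne_top (hpq : p.toReal.HolderConjugate q.toReal)
    (x : ι → ℝ) : ∃ w : ι → ℝ, ‖WithLp.toLp q w‖ ≤ 1 ∧ w ⬝ᵥ x = ‖WithLp.toLp p x‖ := by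
  obtain ⟨g, hg, hgx⟩ := (NNReal.isGreatest_Lp Finset.univ (fun i => ‖x i‖₊) hpq).1
  have hg : ∑ i, (g i : ℝ) ^ q.toReal ≤ 1 := by exact_mod_cast hg
  have hgx : ∑ i, |x i| * g i = (∑ i, |x i| ^ p.toReal) ^ (1 / p.toReal) := by
    simpa using congrArg NNReal.toReal hgx
  refine ⟨fun i => SignType.sign (x i) * g i, ?_, ?_⟩
  · rw [norm_toLp_of_ne_top hpq.symm.pos]
    refine Real.rpow_le_one (by positivity) ((Finset.sum_le_sum fun i _ => ?_).trans hg)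
      hpq.symm.one_div_nonneg
    rw [abs_mul, NNReal.abs_eq]
    exact Real.rpow_le_rpow (by positivity)
      (mul_le_of_le_one_left (g i).2 (abs_coe_sign_le_one (x i))) hpq.symm.nonneg
  · rw [norm_toLp_of_ne_top hpq.pos, ← hgx]
    refine Finset.sum_congr rfl fun i _ => ?_
    rw [mul_right_comm, sign_mul_self]

theorem exists_norm_le_one_dotProduct_eq [p.HolderConjugate q] (x : ι → ℝ) :
    ∃ w : ι → ℝ, ‖WithLp.toLp q w‖ ≤ 1 ∧ w ⬝ᵥ x = ‖WithLp.toLp p x‖ := by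
  rcases holderConjugate_cases p q with ⟨rfl, rfl⟩ | ⟨rfl, rfl⟩ | ⟨-, -, h⟩
  · exact exists_norm_top_le_one_dotProduct_eq x
  · exact exists_norm_one_le_one_dotProduct_eq x
  · exact exists_norm_le_one_dotProduct_eq_of_ne_top h x

end LpDuality

section RobustConstraints

variable {ι : Type*} [Fintype ι] {p q : ℝ≥0∞}

theorem isCompact_setOf_norm_toLp_le [Fact (1 ≤ p)] (r : ℝ) :
    IsCompact {w : ι → ℝ | ‖WithLp.toLp p w‖ ≤ r} := by
  convert (isCompact_closedBall (0 : PiLp p fun _ : ι => ℝ) r).image (PiLp.continuous_ofLp p _)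
  ext w
  refine ⟨fun hw => ⟨WithLp.toLp p w, by simpa using hw, rfl⟩, ?_⟩
  rintro ⟨w, hw, rfl⟩
  simpa using hw

theorem convex_setOf_norm_toLp_le [Fact (1 ≤ p)] (r : ℝ) :
    Convex ℝ {w : ι → ℝ | ‖WithLp.toLp p w‖ ≤ r} := by
  simpa using (convexOn_univ_norm (E := PiLp p fun _ : ι => ℝ)).comp_linearMap
    (WithLp.linearEquiv p ℝ (ι → ℝ)).symm.toLinearMap |>.convex_le r

theorem exists_norm_le_dotProduct_eq [Fact (1 ≤ q)] [p.HolderConjugate q] {lam : ℝ}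
    (hlam : 0 ≤ lam) (x : ι → ℝ) :
    ∃ w : ι → ℝ, ‖WithLp.toLp q w‖ ≤ lam ∧ w ⬝ᵥ x = lam * ‖WithLp.toLp p x‖ := by
  obtain ⟨w, hw, hwx⟩ := exists_norm_le_one_dotProduct_eq (p := p) (q := q) x
  refine ⟨lam • w, ?_, by rw [smul_dotProduct, hwx, smul_eq_mul]⟩
  rw [WithLp.toLp_smul, norm_smul, Real.norm_of_nonneg hlam]
  exact mul_le_of_le_one_right hlam hw

-- The ball of radius `lam` in the dual norm turns the transport penalty into a saddle function.
theorem forall_dotProduct_le_add_mul_norm_iff [Fact (1 ≤ p)] [Fact (1 ≤ q)]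
    [p.HolderConjugate q] {B : Set (ι → ℝ)} (kB : IsCompact B) (cB : Convex ℝ B)
    (neB : B.Nonempty) {x v : ι → ℝ} {r lam : ℝ} (hlam : 0 ≤ lam) :
    (∀ y ∈ B, v ⬝ᵥ y ≤ r + lam * ‖WithLp.toLp p (x - y)‖) ↔
      ∃ w, ‖WithLp.toLp q w‖ ≤ lam ∧ ∀ y ∈ B, v ⬝ᵥ y + w ⬝ᵥ (x - y) ≤ r := by
  constructor
  · intro h
    let f (w y : ι → ℝ) : ℝ := v ⬝ᵥ y + w ⬝ᵥ (x - y)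
    have affine_left (y : ι → ℝ) : (f · y) =
        fun w => dotProductBilin ℝ ℝ (x - y) w + v ⬝ᵥ y := by
      ext w
      simp [f, dotProduct_comm, add_comm]
    have affine_right (w : ι → ℝ) : f w =
        fun y => dotProductBilin ℝ ℝ (v - w) y + w ⬝ᵥ x := by
      ext w
      simp only [f, dotProduct_sub, dotProductBilin_apply_apply, sub_dotProduct]
      ring
    obtain ⟨w, hw, y, hy, hsaddle⟩ := Sion.exists_isSaddlePointOn
      (f := f) (X := {w | ‖WithLp.toLp q w‖ ≤ lam})
      ⟨0, by simpa using hlam⟩ (convex_setOf_norm_toLp_le lam) (isCompact_setOf_norm_toLp_le lam)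
      (fun y _ => ContinuousOn.lowerSemicontinuousOn (by fun_prop))
      (fun y _ => affine_left y ▸ ((LinearMap.convexOn _
        (convex_setOf_norm_toLp_le lam)).add_const _).quasiconvexOn)
      cB neB kB (fun w _ => ContinuousOn.upperSemicontinuousOn (by fun_prop))
      (fun w _ => affine_right w ▸ ((LinearMap.concaveOn _ cB).add_const _).quasiconcaveOn)
    obtain ⟨u, hu, huxy⟩ := exists_norm_le_dotProduct_eq (p := p) (q := q) hlam (x - y)
    refine ⟨w, hw, fun z hz => (hsaddle (-u) (by simpa using hu) z hz).trans ?_⟩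
    rw [show f (-u) y = v ⬝ᵥ y + -u ⬝ᵥ (x - y) from rfl, neg_dotProduct, huxy]
    linarith [h y hy]
  · rintro ⟨w, hw, h⟩ y hy
    have holder := dotProduct_le_norm_mul_norm (p := q) (q := p) (-w) (x - y)
    rw [neg_dotProduct, WithLp.toLp_neg, norm_neg] at holder
    have := mul_le_mul_of_nonneg_right hw (norm_nonneg (WithLp.toLp p (x - y)))
    linarith [h y hy]

theorem forall_mem_Icc_dotProduct_le_iff {a b d : ι → ℝ} {r : ℝ} (hab : a ≤ b) :
    (∀ y ∈ Set.Icc a b, d ⬝ᵥ y ≤ r) ↔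
      ∃ γ η : ι → ℝ, 0 ≤ γ ∧ 0 ≤ η ∧ d = η - γ ∧ η ⬝ᵥ b - γ ⬝ᵥ a ≤ r := by
  constructor
  · intro h
    refine ⟨d⁻, d⁺, negPart_nonneg d, posPart_nonneg d, (posPart_sub_negPart d).symm, ?_⟩
    let y i := if 0 ≤ d i then b i else a i
    have hy : y ∈ Set.Icc a b := by
      refine ⟨fun i => ?_, fun i => ?_⟩ <;> by_cases hi : 0 ≤ d i <;> simp [y, hi, hab i]
    refine le_trans (le_of_eq ?_) (h y hy)
    simp only [dotProduct, ← Finset.sum_sub_distrib]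
    refine Finset.sum_congr rfl fun i _ => ?_
    by_cases hi : 0 ≤ d i
    · simp [y, hi]
    · simp [y, hi, (not_le.1 hi).le]
  · rintro ⟨γ, η, hγ, hη, rfl, hr⟩ y hy
    rw [sub_dotProduct]
    linarith [dotProduct_le_dotProduct_of_nonneg_left hy.1 hγ,
      dotProduct_le_dotProduct_of_nonneg_left hy.2 hη]

theorem forall_mem_Icc_dotProduct_le_add_mul_norm_iff [Fact (1 ≤ p)] [Fact (1 ≤ q)]
    [p.HolderConjugate q] {a b x v : ι → ℝ} {r lam : ℝ} (hx : x ∈ Set.Icc a b) (hlam : 0 ≤ lam) :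
    (∀ y ∈ Set.Icc a b, v ⬝ᵥ y ≤ r + lam * ‖WithLp.toLp p (x - y)‖) ↔
      ∃ γ η : ι → ℝ, 0 ≤ γ ∧ 0 ≤ η ∧ ‖WithLp.toLp q (v + γ - η)‖ ≤ lam ∧
        (v + γ - η) ⬝ᵥ x - γ ⬝ᵥ a + η ⬝ᵥ b ≤ r := by
  have split (w y : ι → ℝ) : v ⬝ᵥ y + w ⬝ᵥ (x - y) ≤ r ↔ (v - w) ⬝ᵥ y ≤ r - w ⬝ᵥ x := by
    rw [sub_dotProduct, dotProduct_sub]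
    constructor <;> intro h <;> linarith
  simp only [forall_dotProduct_le_add_mul_norm_iff (q := q) isCompact_Icc (convex_Icc a b) ⟨x, hx⟩
    hlam, split, forall_mem_Icc_dotProduct_le_iff (hx.1.trans hx.2)]
  constructor
  · rintro ⟨w, hw, γ, η, hγ, hη, hwγη, hr⟩
    obtain rfl : v + γ - η = w := by linear_combination hwγη
    exact ⟨γ, η, hγ, hη, hw, by linarith⟩
  · rintro ⟨γ, η, hγ, hη, hw, hr⟩
    exact ⟨v + γ - η, hw, γ, η, hγ, hη, by abel, by linarith⟩

end RobustConstraints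

section MeanExcess

theorem iInf_add_mul_sInf {ι : Type*} [Nonempty ι] {f : ι → ℝ} {D : ι → Set ℝ} {c m : ℝ}
    (hc : 0 < c) (hD : ∀ t, (D t).Nonempty) (hm : ∀ t, ∀ d ∈ D t, m ≤ f t + c * d) :
    ⨅ t, (f t + c * sInf (D t)) = sInf {y | ∃ t, ∃ d ∈ D t, y = f t + c * d} := by
  have sInf_image (t : ι) : f t + c * sInf (D t) = sInf ((fun d => f t + c * d) '' D t) := by
    refine Monotone.map_csInf_of_continuousAt (f := fun d => f t + c * d) (by fun_prop)
      (fun d d' h => by dsimp only; gcongr) (hD t) ⟨(m - f t) / c, fun d hd => ?_⟩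
    rw [div_le_iff₀' hc]
    linarith [hm t d hd]
  simp only [sInf_image]
  have lower (t : ι) : m ∈ lowerBounds ((fun d => f t + c * d) '' D t) :=
    Set.forall_mem_image.2 (hm t)
  apply le_antisymm
  · obtain ⟨t₀⟩ := ‹Nonempty ι›
    obtain ⟨d₀, hd₀⟩ := hD t₀
    refine le_csInf ⟨_, t₀, d₀, hd₀, rfl⟩ ?_
    rintro _ ⟨t, d, hd, rfl⟩
    refine (ciInf_le ⟨m, Set.forall_mem_range.2 fun t => ?_⟩ t).trans
      (csInf_le ⟨m, lower t⟩ ⟨d, hd, rfl⟩)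
    exact le_csInf ((hD t).image _) (lower t)
  · refine le_ciInf fun t => le_csInf ((hD t).image _) ?_
    rintro _ ⟨d, hd, rfl⟩
    refine csInf_le ⟨m, ?_⟩ ⟨t, d, hd, rfl⟩
    rintro _ ⟨t, d, hd, rfl⟩
    exact hm t d hd

variable {n N : ℕ} {p q : ℝ≥0∞}

theorem lpNorm_eq_norm_toLp [hp : Fact (1 ≤ p)] (x : Fin n → ℝ) :
    lpNorm p x = ‖WithLp.toLp p x‖ := by
  rcases eq_or_ne p ∞ with rfl | hp'
  · rw [_root_.lpNorm, if_pos rfl, PiLp.norm_eq_ciSup]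
    rfl
  · have hp0 := ENNReal.toReal_pos (zero_lt_one.trans_le hp.out).ne' hp'
    rw [_root_.lpNorm, if_neg hp', norm_toLp_of_ne_top hp0]

theorem empirical_eq_empiricalMeasure (ξ : Fin N → Fin n → ℝ) :
    empirical N ξ = empiricalMeasure ξ := by
  rw [empirical, empiricalMeasure, Fintype.card_fin]

theorem continuous_hfun (v : Fin n → ℝ) (t : ℝ) : Continuous (hfun v t) := by
  unfold hfun ip
  fun_prop

theorem forall_hfun_le_add_mul_lpNorm_iff [Fact (1 ≤ p)] [Fact (1 ≤ q)] [p.HolderConjugate q]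
    {a b x v : Fin n → ℝ} {s t lam : ℝ} (hx : x ∈ Set.Icc a b) (hlam : 0 ≤ lam) :
    (∀ y ∈ Set.Icc a b, hfun v t y ≤ s + lam * lpNorm p (x - y)) ↔
      0 ≤ s ∧ ∃ γ η : Fin n → ℝ, 0 ≤ γ ∧ 0 ≤ η ∧ lpNorm q (v + γ - η) ≤ lam ∧
        ip (v + γ - η) x - ip γ a + ip η b - t ≤ s := by
  have nonneg_iff : (∀ y ∈ Set.Icc a b, 0 ≤ s + lam * ‖WithLp.toLp p (x - y)‖) ↔ 0 ≤ s :=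
    ⟨fun h => by simpa using h x hx, fun hs y _ => by positivity⟩
  have hip (y : Fin n → ℝ) : ip y v = v ⬝ᵥ y := dotProduct_comm y v
  simp only [hfun, lpNorm_eq_norm_toLp, max_le_iff, forall_and, nonneg_iff, hip,
    sub_le_iff_le_add, add_right_comm _ _ t]
  rw [forall_mem_Icc_dotProduct_le_add_mul_norm_iff (q := q) hx hlam, and_comm]
  rfl

theorem exists_mem_dualValues_hfun_iff [Fact (1 ≤ p)] [Fact (1 ≤ q)] [p.HolderConjugate q]
    [NeZero N] {a b v : Fin n → ℝ} {ξ : Fin N → Fin n → ℝ} (hξ : ∀ i, ξ i ∈ Set.Icc a b)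
    {t ε : ℝ} {P : ℝ → Prop} :
    (∃ d ∈ dualValues (fun x y => lpNorm p (x - y)) (hfun v t) (Set.Icc a b) ξ ε, P d) ↔
      ∃ (s : Fin N → ℝ) (lam : ℝ) (γ η : Fin N → Fin n → ℝ),
        (∀ i, ip (v + γ i - η i) (ξ i) - ip (γ i) a + ip (η i) b - t ≤ s i ∧
          lpNorm q (v + γ i - η i) ≤ lam ∧ (∀ j, 0 ≤ γ i j) ∧ (∀ j, 0 ≤ η i j) ∧ 0 ≤ s i) ∧
        P ((1 / (N : ℝ)) * ∑ i, s i + lam * ε) := by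
  have hmean (s : Fin N → ℝ) : 𝔼 i, s i = (1 / (N : ℝ)) * ∑ i, s i := by
    rw [Fintype.expect_eq_sum_div_card, Fintype.card_fin, div_eq_inv_mul, one_div]
  simp only [dualValues, hmean, Set.mem_ofPred_eq]
  constructor
  · rintro ⟨_, ⟨s, lam, hlam, hs, rfl⟩, hP⟩
    have hs i := (forall_hfun_le_add_mul_lpNorm_iff (q := q) (hξ i) hlam).1 (hs i)
    choose hs0 γ η hγ hη hnorm hle using hs
    exact ⟨s, lam, γ, η, fun i => ⟨hle i, hnorm i, hγ i, hη i, hs0 i⟩, hP⟩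
  · rintro ⟨s, lam, γ, η, h, hP⟩
    have hlam : 0 ≤ lam := by
      have hnorm := (h 0).2.1
      rw [lpNorm_eq_norm_toLp] at hnorm
      exact (norm_nonneg _).trans hnorm
    refine ⟨_, ⟨s, lam, hlam, fun i => ?_, rfl⟩, hP⟩
    obtain ⟨hle, hnorm, hγ, hη, hs0⟩ := h i
    exact (forall_hfun_le_add_mul_lpNorm_iff (q := q) (hξ i) hlam).2
      ⟨hs0, γ i, η i, hγ, hη, hnorm, hle⟩

theorem sSup_primalValues_hfun_eq_sInf_dualValues [Fact (1 ≤ p)] [NeZero N] {a b : Fin n → ℝ}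
    {ξ : Fin N → Fin n → ℝ} (hξ : ∀ i, ξ i ∈ Set.Icc a b) {ε : ℝ} (hε : 0 ≤ ε)
    (v : Fin n → ℝ) (t : ℝ) :
    sSup (primalValues (fun x y => lpNorm p (x - y)) (hfun v t) (Set.Icc a b) (empirical N ξ) ε) =
      sInf (dualValues (fun x y => lpNorm p (x - y)) (hfun v t) (Set.Icc a b) ξ ε) := by
  simp only [empirical_eq_empiricalMeasure, lpNorm_eq_norm_toLp]
  exact sSup_primalValues_eq_sInf_dualValues (fun _ _ => norm_nonneg _) (fun _ => by simp)
    (continuous_hfun v t).measurable (fun _ => le_max_right _ _) isCompact_Icc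
    (continuous_hfun v t).continuousOn (fun _ => by fun_prop) hξ hε

theorem expect_ip_le_add_mul_of_mem_dualValues_hfun [Fact (1 ≤ p)] [NeZero N]
    {B : Set (Fin n → ℝ)} {ξ : Fin N → Fin n → ℝ} (hξ : ∀ i, ξ i ∈ B) {ε c : ℝ} (hε : 0 ≤ ε)
    (hc : 1 ≤ c) {v : Fin n → ℝ} {t d : ℝ}
    (hd : d ∈ dualValues (fun x y => lpNorm p (x - y)) (hfun v t) B ξ ε) :
    𝔼 i, ip (ξ i) v ≤ t + c * d := by
  have hd : 𝔼 i, hfun v t (ξ i) ≤ d :=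
    expect_le_of_mem_dualValues (fun i => by simp [lpNorm_eq_norm_toLp]) hξ hε hd
  have hd0 : 0 ≤ d := (Finset.expect_nonneg fun i _ => le_max_right _ _).trans hd
  have hip : 𝔼 i, (ip (ξ i) v - t) ≤ 𝔼 i, hfun v t (ξ i) :=
    Finset.expect_le_expect fun i _ => le_max_left _ _
  rw [Finset.expect_sub_distrib, Fintype.expect_const] at hip
  linarith [le_mul_of_one_le_left hd0 hc]

end MeanExcess

/-- Theorem 2, worst-case METT with support set: the infimum over `t` of
`t + (1/α)·sup{∫ h(v,t,·) dμ : μ supported on [a,b], d_W(F_N,μ) ≤ ε}` equals the optimal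
value of the dual convex program over `(t,s,λ,γ,η)`. -/
theorem stmt10 (n : ℕ) (hn : 1 ≤ n) (p q : ℝ≥0∞) (hp : 1 ≤ p) (hpq : 1 / p + 1 / q = 1)
    (a b : Fin n → ℝ) (hab : ∀ i, a i ≤ b i)
    (N : ℕ) (hN : 1 ≤ N) (ξ : Fin N → Fin n → ℝ)
    (hξ : ∀ k, ∀ i, a i ≤ ξ k i ∧ ξ k i ≤ b i)
    (v : Fin n → ℝ) (α : ℝ) (hα : 0 < α) (hα1 : α ≤ 1) (ε : ℝ) (hε : 0 ≤ ε) :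
    (⨅ t : ℝ, t + (1 / α) *
        sSup {r : ℝ | ∃ μ : Measure (Fin n → ℝ), IsProbabilityMeasure μ ∧
          μ {x : Fin n → ℝ | ∀ i, a i ≤ x i ∧ x i ≤ b i}ᶜ = 0 ∧
          dW p (empirical N ξ) μ ≤ ENNReal.ofReal ε ∧ r = ∫ x, hfun v t x ∂μ}) =
      sInf {y : ℝ | ∃ (t : ℝ) (s : Fin N → ℝ) (lam : ℝ) (γ η : Fin N → Fin n → ℝ),
        (∀ i, ip (v + γ i - η i) (ξ i) - ip (γ i) a + ip (η i) b - t ≤ s i ∧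
          lpNorm q (v + γ i - η i) ≤ lam ∧
          (∀ j, 0 ≤ γ i j) ∧ (∀ j, 0 ≤ η i j) ∧ 0 ≤ s i) ∧
        y = t + (1 / α) * ((1 / (N : ℝ)) * ∑ i, s i + lam * ε)} := by
  have : Fact (1 ≤ p) := ⟨hp⟩
  have : p.HolderConjugate q := ⟨by simpa using hpq⟩
  have : Fact (1 ≤ q) := ⟨ENNReal.HolderConjugate.one_le q p⟩
  have : NeZero N := ⟨by omega⟩
  have box_eq : {x : Fin n → ℝ | ∀ i, a i ≤ x i ∧ x i ≤ b i} = Set.Icc a b :=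
    Set.ext fun x => forall_and
  have hξ (k) : ξ k ∈ Set.Icc a b := forall_and.1 (hξ k)
  rw [box_eq]
  let dual (t : ℝ) : Set ℝ :=
    dualValues (fun x y => lpNorm p (x - y)) (hfun v t) (Set.Icc a b) ξ ε
  have dual_nonempty (t : ℝ) : (dual t).Nonempty :=
    dualValues_nonempty isCompact_Icc ⟨_, hξ 0⟩ (continuous_hfun v t).continuousOn
  have hα' : 1 ≤ 1 / α := one_le_one_div hα hα1
  calc _ = ⨅ t : ℝ, t + 1 / α * sInf (dual t) :=
        iInf_congr fun t => congrArg (t + 1 / α * ·)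
          (sSup_primalValues_hfun_eq_sInf_dualValues hξ hε v t)
    _ = sInf {y | ∃ t, ∃ d ∈ dual t, y = t + 1 / α * d} :=
        iInf_add_mul_sInf (by positivity) dual_nonempty fun t d hd =>
          expect_ip_le_add_mul_of_mem_dualValues_hfun hξ hε hα' hd
    _ = _ := by simp only [dual, exists_mem_dualValues_hfun_iff (q := q) hξ]
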